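/- There exist universal constants c > 0 and C ≥ 1 such that the following holds. Let (g_υ)_{υ∈ℝ^I} be a nice distribution of polynomials of degree at most d on ℝ^n. Fix parameters 0 < β' < 1, R' ≥ 1, m ∈ ℕ with m ≥ 1, 0 < ε ≤ 1, and assume 0 ≤ λ ≤ c⁴·ε·β'^5/(R'²·m³·d). Then for x ∼ N(0,1)^n, except with probability at most β', we have (1/ε)·E_υ[HyperVar_{R'}[((g_υ)_{λ|x})^{≥m}]] ≤ (C·c·β'/m)^{4m}·E_υ[‖g_υ‖₂²]. -/

import Mathlib

open MeasureTheory ProbabilityTheory MvPolynomial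

/-- The standard Gaussian measure `N(0,1)^n` on `ℝ^n`. -/
noncomputable def gaussianN (n : ℕ) : Measure (Fin n → ℝ) :=
  Measure.pi fun _ => gaussianReal 0 1

/-- The normalized probabilists' Hermite polynomial `h_k = H_k / √(k!)`. -/
noncomputable def hermiteFn (k : ℕ) (t : ℝ) : ℝ :=
  ((Polynomial.hermite k).map (Int.castRingHom ℝ)).eval t / Real.sqrt (Nat.factorial k)

/-- The multivariate Hermite polynomial `h_α(x) = ∏ i, h_{α i}(x i)`. -/
noncomputable def hermiteMv {n : ℕ} (α : Fin n → ℕ) (x : Fin n → ℝ) : ℝ :=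
  ∏ i, hermiteFn (α i) (x i)

/-- Hermite coefficient `f̂(α) = E_{x ∼ N(0,1)^n}[f(x)·h_α(x)]` of a function. -/
noncomputable def hermiteCoeffF {n : ℕ} (f : (Fin n → ℝ) → ℝ) (α : Fin n → ℕ) : ℝ :=
  ∫ x, f x * hermiteMv α x ∂(gaussianN n)

/-- Hermite coefficient `ĝ(α)` of a polynomial. -/
noncomputable def hermiteCoeff {n : ℕ} (g : MvPolynomial (Fin n) ℝ) (α : Fin n → ℕ) : ℝ :=
  hermiteCoeffF (fun x => eval x g) α

/-- The squared Gaussian 2-norm `‖g‖₂² = E_{x ∼ N(0,1)^n}[g(x)²]`. -/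
noncomputable def norm2sq {n : ℕ} (g : MvPolynomial (Fin n) ℝ) : ℝ :=
  ∫ x, (eval x g) ^ 2 ∂(gaussianN n)

/-- The `λ`-zoom of `g` at `x`: `g_{λ|x}(y) = g(√(1-λ)·x + √λ·y)`, as a polynomial in `y`. -/
noncomputable def zoom {n : ℕ} (g : MvPolynomial (Fin n) ℝ) (lam : ℝ) (x : Fin n → ℝ) :
    MvPolynomial (Fin n) ℝ :=
  aeval (fun i => C (Real.sqrt (1 - lam) * x i) + C (Real.sqrt lam) * X i) g

/-- `HyperVar_R[g^{≥m}] = Σ_{|α| ≥ m} R^{2|α|}·ĝ(α)²`. -/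
noncomputable def hyperVarGE {n : ℕ} (R : ℝ) (m : ℕ) (g : MvPolynomial (Fin n) ℝ) : ℝ :=
  ∑' α : Fin n → ℕ, if m ≤ ∑ i, α i then R ^ (2 * ∑ i, α i) * hermiteCoeff g α ^ 2 else 0

/-- `HyperVar_R[g] = Σ_{α ≠ 0} R^{2|α|}·ĝ(α)²`. -/
noncomputable def hyperVar {n : ℕ} (R : ℝ) (g : MvPolynomial (Fin n) ℝ) : ℝ :=
  hyperVarGE R 1 g

/-- A nice distribution of polynomials of degree at most `d` on `ℝ^n`, indexed by
`υ ∈ ℝ^I`: each `g υ` has degree at most `d` and each coefficient of `g υ` is a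
polynomial of degree at most `d` in `υ`. -/
def NiceFamily (n I d : ℕ) (g : (Fin I → ℝ) → MvPolynomial (Fin n) ℝ) : Prop :=
  (∀ υ, (g υ).totalDegree ≤ d) ∧
  ∀ m : Fin n →₀ ℕ, ∃ P : MvPolynomial (Fin I) ℝ,
    P.totalDegree ≤ d ∧ ∀ υ, coeff m (g υ) = eval υ P

/-!
Averaged over the centre `x` of a zoom, the squared coefficient of `h_β(y)` in
`h_α(√(1-λ)·x + √λ·y)` is a product of binomial probabilities with success probability `λ`, since
the univariate addition formula is a binomial theorem for Hermite polynomials. Hence a random zoom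
turns the Hermite weight `∑ α, ρ^|α|·ĝ(α)²` into `∑ α, (1 - λ + ρ·λ)^|α|·ĝ(α)²`, which is at most
`(1 - λ + ρ·λ)^d·‖g‖₂² ≤ exp(ρ·λ·d)·‖g‖₂²`.

As in Chernoff's bound, every `s ≥ 1` gives `HyperVar_R[g^{≥m}] ≤ s^{-m}·∑ α, (s·R²)^|α|·ĝ(α)²`.
With `s = m⁴/(ε·β⁵)` the assumption on `λ` says `s·R²·λ·d ≤ m`, so that the expectation over `x` is
at most `(e/s)^m·E_υ[‖g_υ‖₂²]`, and Markov's inequality concludes.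
-/

section Gaussian

variable (μ : ℝ) (v : NNReal)

theorem integrable_eval_gaussianReal (p : Polynomial ℝ) :
    Integrable (fun t => p.eval t) (gaussianReal μ v) := by
  simp_rw [Polynomial.eval_eq_sum_range]
  refine integrable_finsetSum _ fun i _ => Integrable.const_mul ?_ _
  refine (integrable_norm_iff (by fun_prop)).1 ?_
  simpa using (memLp_id_gaussianReal (μ := μ) (v := v) i).integrable_norm_pow'

theorem hasDerivAt_gaussianPDFReal (t : ℝ) :
    HasDerivAt (gaussianPDFReal μ v) (-((t - μ) / v) * gaussianPDFReal μ v t) t := by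
  have hexponent : HasDerivAt (fun t : ℝ => -(t - μ) ^ 2 / (2 * v)) (-((t - μ) / v)) t := by
    refine ((((hasDerivAt_id t).sub_const μ).pow 2).neg.div_const (2 * (v : ℝ))).congr_deriv ?_
    field_simp
    simp
  refine (hexponent.exp.const_mul (Real.sqrt (2 * Real.pi * v))⁻¹).congr_deriv ?_
  rw [gaussianPDFReal]
  ring

variable {v} in
theorem integrable_gaussianPDFReal_mul_eval (hv : v ≠ 0) (p : Polynomial ℝ) :
    Integrable fun t => gaussianPDFReal μ v t * p.eval t := by
  have h := integrable_eval_gaussianReal μ v p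
  rw [gaussianReal_of_var_ne_zero _ hv, integrable_withDensity_iff_integrable_smul'
    (measurable_gaussianPDF _ _) (by simp [gaussianPDF])] at h
  simpa [gaussianPDF, gaussianPDFReal_nonneg] using h

theorem integral_sub_mul_eval_gaussianReal (p : Polynomial ℝ) :
    ∫ t, (t - μ) * p.eval t ∂(gaussianReal μ v) =
      v * ∫ t, (Polynomial.derivative p).eval t ∂(gaussianReal μ v) := by
  rcases eq_or_ne v 0 with rfl | hv
  · simp
  have hderiv (t : ℝ) : HasDerivAt (fun t => v * (gaussianPDFReal μ v t * p.eval t))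
      (v * (gaussianPDFReal μ v t * (Polynomial.derivative p).eval t) -
        gaussianPDFReal μ v t * ((Polynomial.X - Polynomial.C μ) * p).eval t) t := by
    refine (((hasDerivAt_gaussianPDFReal μ v t).mul (p.hasDerivAt t)).const_mul _).congr_deriv ?_
    have : (v : ℝ) ≠ 0 := by exact_mod_cast hv
    simp only [Polynomial.eval_mul, Polynomial.eval_sub, Polynomial.eval_X, Polynomial.eval_C]
    field_simp
    ring
  have hint := integrable_gaussianPDFReal_mul_eval μ hv
  have h := integral_eq_zero_of_hasDerivAt_of_integrable hderiv
    (((hint _).const_mul _).sub (hint _)) ((hint p).const_mul _)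
  rw [integral_sub ((hint _).const_mul _) (hint _), integral_const_mul, sub_eq_zero] at h
  simpa [integral_gaussianReal_eq_integral_smul hv] using h.symm

end Gaussian

/-- The probabilists' Hermite polynomial `H_k` with real coefficients; `hermiteFn k` is its
normalization. -/
noncomputable def hermiteReal (k : ℕ) : Polynomial ℝ :=
  (Polynomial.hermite k).map (Int.castRingHom ℝ)

@[simp]
theorem hermiteReal_zero : hermiteReal 0 = 1 := by simp [hermiteReal]

theorem hermiteReal_succ (k : ℕ) : hermiteReal (k + 1) =
    Polynomial.X * hermiteReal k - Polynomial.derivative (hermiteReal k) := by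
  simp [hermiteReal, Polynomial.hermite_succ]

theorem derivative_hermiteReal_succ (k : ℕ) :
    Polynomial.derivative (hermiteReal (k + 1)) =
      Polynomial.C (k + 1 : ℝ) * hermiteReal k := by
  induction k with
  | zero => simp [hermiteReal_succ]
  | succ k ih =>
    rw [hermiteReal_succ (k + 1), Polynomial.derivative_sub, Polynomial.derivative_mul, ih,
      Polynomial.derivative_C_mul, hermiteReal_succ k]
    simp
    ring

theorem hermiteReal_add_two (k : ℕ) : hermiteReal (k + 2) =
    Polynomial.X * hermiteReal (k + 1) - Polynomial.C (k + 1 : ℝ) * hermiteReal k := by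
  rw [hermiteReal_succ (k + 1), derivative_hermiteReal_succ]

theorem integral_hermiteReal_succ_mul (k : ℕ) (q : Polynomial ℝ) :
    ∫ t, (hermiteReal (k + 1) * q).eval t ∂(gaussianReal 0 1) =
      ∫ t, (hermiteReal k * Polynomial.derivative q).eval t ∂(gaussianReal 0 1) := by
  have hparts : ∫ t, (Polynomial.X * (hermiteReal k * q)).eval t ∂(gaussianReal 0 1) =
      ∫ t, (Polynomial.derivative (hermiteReal k * q)).eval t ∂(gaussianReal 0 1) := by
    simpa using integral_sub_mul_eval_gaussianReal 0 1 (hermiteReal k * q)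
  have hleft : hermiteReal (k + 1) * q =
      Polynomial.X * (hermiteReal k * q) - Polynomial.derivative (hermiteReal k) * q := by
    rw [hermiteReal_succ]
    ring
  have hright : hermiteReal k * Polynomial.derivative q =
      Polynomial.derivative (hermiteReal k * q) - Polynomial.derivative (hermiteReal k) * q := by
    rw [Polynomial.derivative_mul]
    ring
  have hint := integrable_eval_gaussianReal 0 1
  simp only [hleft, hright, Polynomial.eval_sub]
  rw [integral_sub (hint _) (hint _), integral_sub (hint _) (hint _), hparts]

theorem integral_hermiteReal_mul_hermiteReal (j k : ℕ) :
    ∫ t, (hermiteReal j * hermiteReal k).eval t ∂(gaussianReal 0 1) =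
      if j = k then (j.factorial : ℝ) else 0 := by
  induction j generalizing k with
  | zero =>
    cases k with
    | zero => simp
    | succ k =>
      rw [mul_comm, integral_hermiteReal_succ_mul]
      simp
  | succ j ih =>
    rw [integral_hermiteReal_succ_mul]
    cases k with
    | zero => simp
    | succ k =>
      simp only [derivative_hermiteReal_succ, mul_left_comm (hermiteReal j), Polynomial.eval_C_mul,
        integral_const_mul, ih]
      by_cases h : j = k <;> simp [h, Nat.factorial_succ]

theorem hermiteFn_eq_div (k : ℕ) (t : ℝ) :
    hermiteFn k t = (hermiteReal k).eval t / Real.sqrt k.factorial := rfl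

theorem eval_hermiteReal (k : ℕ) (t : ℝ) :
    (hermiteReal k).eval t = Real.sqrt k.factorial * hermiteFn k t := by
  rw [hermiteFn_eq_div, mul_div_cancel₀ _ (by positivity)]

theorem continuous_hermiteFn (k : ℕ) : Continuous (hermiteFn k) := by
  unfold hermiteFn
  fun_prop

theorem integrable_eval_mul_hermiteFn (p : Polynomial ℝ) (k : ℕ) :
    Integrable (fun t => p.eval t * hermiteFn k t) (gaussianReal 0 1) := by
  simpa [hermiteFn_eq_div, mul_div_assoc] using
    (integrable_eval_gaussianReal 0 1 (p * hermiteReal k)).div_const (Real.sqrt k.factorial)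

theorem integrable_hermiteFn_mul_hermiteFn (j k : ℕ) :
    Integrable (fun t => hermiteFn j t * hermiteFn k t) (gaussianReal 0 1) := by
  simpa [hermiteFn_eq_div, div_mul_eq_mul_div] using
    (integrable_eval_mul_hermiteFn (hermiteReal j) k).div_const (Real.sqrt j.factorial)

theorem integral_hermiteFn_mul_hermiteFn (j k : ℕ) :
    ∫ t, hermiteFn j t * hermiteFn k t ∂(gaussianReal 0 1) = if j = k then 1 else 0 := by
  simp only [hermiteFn_eq_div, div_mul_div_comm, ← Polynomial.eval_mul, integral_div,
    integral_hermiteReal_mul_hermiteReal]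
  split_ifs with h
  · rw [← h, Real.mul_self_sqrt (by positivity), div_self (by positivity)]
  · exact zero_div _

/-- The Hermite coefficient `E_{t ∼ N(0,1)}[p(t)·h_k(t)]` of a univariate polynomial. Those of the
monomials are the building blocks of the multivariate `hermiteCoeff`. -/
noncomputable def polyHermiteCoeff (p : Polynomial ℝ) (k : ℕ) : ℝ :=
  ∫ t, p.eval t * hermiteFn k t ∂(gaussianReal 0 1)

theorem polyHermiteCoeff_add (p q : Polynomial ℝ) (k : ℕ) :
    polyHermiteCoeff (p + q) k = polyHermiteCoeff p k + polyHermiteCoeff q k := by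
  simp only [polyHermiteCoeff, Polynomial.eval_add, add_mul]
  exact integral_add (integrable_eval_mul_hermiteFn p k) (integrable_eval_mul_hermiteFn q k)

theorem polyHermiteCoeff_smul (r : ℝ) (p : Polynomial ℝ) (k : ℕ) :
    polyHermiteCoeff (r • p) k = r * polyHermiteCoeff p k := by
  simp only [polyHermiteCoeff, Polynomial.eval_smul, smul_eq_mul, mul_assoc, integral_const_mul]

theorem polyHermiteCoeff_hermiteReal (j k : ℕ) :
    polyHermiteCoeff (hermiteReal j) k = if j = k then Real.sqrt j.factorial else 0 := by
  simp [polyHermiteCoeff, eval_hermiteReal, mul_assoc, integral_const_mul,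
    integral_hermiteFn_mul_hermiteFn]

theorem mem_span_hermiteReal {p : Polynomial ℝ} {d : ℕ} (hp : p.natDegree ≤ d) :
    p ∈ Submodule.span ℝ (hermiteReal '' Set.Iic d) := by
  let S : Polynomial.Sequence ℝ :=
    { elems' := hermiteReal
      degree_eq' := fun i => by
        rw [hermiteReal, (Polynomial.hermite_monic i).degree_map, Polynomial.degree_hermite] }
  have hspan := S.span_degreeLE (m := d) fun i _ => IsUnit.mk0 _ (by simp)
  exact hspan ▸ Polynomial.mem_degreeLE.2 (Polynomial.natDegree_le_iff_degree_le.1 hp)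

theorem eval_eq_sum_polyHermiteCoeff {p : Polynomial ℝ} {d : ℕ} (hp : p.natDegree ≤ d) (t : ℝ) :
    p.eval t = ∑ k ∈ Finset.range (d + 1), polyHermiteCoeff p k * hermiteFn k t := by
  have hspan := mem_span_hermiteReal hp
  clear hp
  induction hspan using Submodule.span_induction with
  | mem p h =>
    obtain ⟨j, hj, rfl⟩ := h
    simp [polyHermiteCoeff_hermiteReal, eval_hermiteReal, Nat.lt_succ_of_le hj]
  | zero => simp [polyHermiteCoeff]
  | add p q _ _ hp hq => simp [polyHermiteCoeff_add, add_mul, Finset.sum_add_distrib, hp, hq]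
  | smul r p _ hp => simp [polyHermiteCoeff_smul, mul_assoc, ← Finset.mul_sum, hp]

theorem polyHermiteCoeff_eq_zero {p : Polynomial ℝ} {k : ℕ} (hp : p.natDegree < k) :
    polyHermiteCoeff p k = 0 := by
  simp only [polyHermiteCoeff]
  simp_rw [fun t => eval_eq_sum_polyHermiteCoeff (le_refl p.natDegree) t, Finset.sum_mul, mul_assoc]
  rw [integral_finsetSum _ fun j _ => (integrable_hermiteFn_mul_hermiteFn j k).const_mul _]
  refine Finset.sum_eq_zero fun j hj => ?_
  have hjk : j ≠ k := by
    have := Finset.mem_range.1 hj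
    lia
  rw [integral_const_mul, integral_hermiteFn_mul_hermiteFn, if_neg hjk, mul_zero]

section ExponentialGeneratingFunction

open scoped PowerSeries

theorem powerSeries_eq_of_derivative_eq_mul {R : Type*} [CommSemiring R] [IsCancelMulZero R]
    [CharZero R] {u f g : R⟦X⟧} (hf : d⁄dX R f = u * f) (hg : d⁄dX R g = u * g)
    (h0 : PowerSeries.constantCoeff f = PowerSeries.constantCoeff g) :
    f = g := by
  suffices h : ∀ n, ∀ k ≤ n, PowerSeries.coeff k f = PowerSeries.coeff k g from
    PowerSeries.ext fun n => h n n le_rfl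
  intro n
  induction n with
  | zero => simpa using h0
  | succ n ih =>
    intro k hk
    rcases hk.lt_or_eq with hk | rfl
    · exact ih k (Nat.le_of_lt_succ hk)
    have hderiv : PowerSeries.coeff n (d⁄dX R f) = PowerSeries.coeff n (d⁄dX R g) := by
      rw [hf, hg, PowerSeries.coeff_mul, PowerSeries.coeff_mul]
      refine Finset.sum_congr rfl fun ij hij => ?_
      rw [ih ij.2 (Finset.HasAntidiagonal.antidiagonal.snd_le hij)]
    rw [PowerSeries.coeff_derivative, PowerSeries.coeff_derivative] at hderiv
    exact mul_right_cancel₀ (Nat.cast_add_one_ne_zero n) hderiv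

theorem derivative_rescale {R : Type*} [CommSemiring R] (a : R) (f : R⟦X⟧) :
    d⁄dX R (PowerSeries.rescale a f) = PowerSeries.C a * PowerSeries.rescale a (d⁄dX R f) := by
  ext k
  simp only [PowerSeries.coeff_derivative, PowerSeries.coeff_rescale, PowerSeries.coeff_C_mul]
  ring

/-- The exponential generating function `∑ k, H_k(x)·T^k/k!` of the Hermite polynomials, that is,
the Taylor series of `exp(x·T - T²/2)` in `T`. -/
noncomputable def hermiteEGF (x : ℝ) : ℝ⟦X⟧ :=
  PowerSeries.mk fun k => (hermiteReal k).eval x / k.factorial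

theorem derivative_hermiteEGF (x : ℝ) :
    d⁄dX ℝ (hermiteEGF x) = (PowerSeries.C x - PowerSeries.X) * hermiteEGF x := by
  ext k
  cases k with
  | zero => simp [hermiteEGF, PowerSeries.coeff_derivative, sub_mul, hermiteReal_succ]
  | succ k =>
    simp only [hermiteEGF, PowerSeries.coeff_derivative, sub_mul, map_sub, PowerSeries.coeff_C_mul,
      PowerSeries.coeff_succ_X_mul, PowerSeries.coeff_mk, hermiteReal_add_two, Polynomial.eval_sub,
      Polynomial.eval_mul, Polynomial.eval_X, Polynomial.eval_C, Nat.factorial_succ]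
    push_cast
    field_simp

theorem hermiteEGF_add {a b : ℝ} (hab : a ^ 2 + b ^ 2 = 1) (x y : ℝ) :
    hermiteEGF (a * x + b * y) =
      PowerSeries.rescale b (hermiteEGF y) * PowerSeries.rescale a (hermiteEGF x) := by
  refine powerSeries_eq_of_derivative_eq_mul (derivative_hermiteEGF _) ?_ ?_
  · have hC : (PowerSeries.C a : ℝ⟦X⟧) ^ 2 + PowerSeries.C b ^ 2 = 1 := by
      rw [← map_pow, ← map_pow, ← map_add, hab, map_one]
    have hrescale (c z : ℝ) : PowerSeries.rescale c (PowerSeries.C z) = PowerSeries.C z := by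
      ext (_ | k) <;> simp [PowerSeries.coeff_rescale, PowerSeries.coeff_C]
    simp only [Derivation.leibniz, smul_eq_mul, derivative_rescale, derivative_hermiteEGF, map_mul,
      map_sub, map_add, PowerSeries.rescale_X, hrescale]
    linear_combination -PowerSeries.X * PowerSeries.rescale b (hermiteEGF y) *
      PowerSeries.rescale a (hermiteEGF x) * hC
  · simp only [map_mul, ← PowerSeries.coeff_zero_eq_constantCoeff_apply, PowerSeries.coeff_rescale]
    simp [hermiteEGF]

theorem eval_hermiteReal_add {a b : ℝ} (hab : a ^ 2 + b ^ 2 = 1) (k : ℕ) (x y : ℝ) :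
    (hermiteReal k).eval (a * x + b * y) = ∑ j ∈ Finset.range (k + 1), (k.choose j : ℝ) *
      (a ^ (k - j) * (hermiteReal (k - j)).eval x) * (b ^ j * (hermiteReal j).eval y) := by
  have hcoeff := congrArg (PowerSeries.coeff k) (hermiteEGF_add hab x y)
  rw [PowerSeries.coeff_mul, Finset.Nat.sum_antidiagonal_eq_sum_range_succ_mk] at hcoeff
  simp only [hermiteEGF, PowerSeries.coeff_rescale, PowerSeries.coeff_mk] at hcoeff
  rw [div_eq_iff (by positivity), Finset.sum_mul] at hcoeff
  rw [hcoeff]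
  refine Finset.sum_congr rfl fun j hj => ?_
  rw [Nat.cast_choose ℝ (Finset.mem_range_succ_iff.1 hj)]
  ring

end ExponentialGeneratingFunction

/-- The coefficient of `h_{k-j}(x)·h_j(y)` in the expansion of `h_k(a·x + b·y)`, where
`a² + b² = 1`. Its square is the probability that a binomial variable of parameters `k` and `b²`
equals `j`. -/
noncomputable def zoomCoeff (a b : ℝ) (k j : ℕ) : ℝ :=
  Real.sqrt (k.choose j) * a ^ (k - j) * b ^ j

theorem zoomCoeff_eq_zero_of_lt (a b : ℝ) {k j : ℕ} (h : k < j) : zoomCoeff a b k j = 0 := by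
  simp [zoomCoeff, Nat.choose_eq_zero_of_lt h]

theorem sum_range_succ_eq_of_le {M : Type*} [AddCommMonoid M] {k d : ℕ} (hkd : k ≤ d) {f : ℕ → M}
    (hf : ∀ j, k < j → f j = 0) :
    ∑ j ∈ Finset.range (d + 1), f j = ∑ j ∈ Finset.range (k + 1), f j :=
  Finset.eventually_constant_sum (fun j hj => hf j hj) (Nat.succ_le_succ hkd)

theorem hermiteFn_add {a b : ℝ} (hab : a ^ 2 + b ^ 2 = 1) {k d : ℕ} (hkd : k ≤ d) (x y : ℝ) :
    hermiteFn k (a * x + b * y) = ∑ j ∈ Finset.range (d + 1),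
      zoomCoeff a b k j * hermiteFn (k - j) x * hermiteFn j y := by
  rw [sum_range_succ_eq_of_le hkd fun j hj => by simp [zoomCoeff_eq_zero_of_lt a b hj],
    hermiteFn_eq_div, eval_hermiteReal_add hab, div_eq_iff (by positivity), Finset.sum_mul]
  refine Finset.sum_congr rfl fun j hj => ?_
  have hfactorial : Real.sqrt (k.choose j) * Real.sqrt j.factorial * Real.sqrt (k - j).factorial =
      Real.sqrt k.factorial := by
    rw [← Real.sqrt_mul (by positivity), ← Real.sqrt_mul (by positivity)]
    exact_mod_cast congrArg (fun n : ℕ => Real.sqrt n)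
      (Nat.choose_mul_factorial_mul_factorial (Finset.mem_range_succ_iff.1 hj))
  have hchoose := Real.mul_self_sqrt (Nat.cast_nonneg (α := ℝ) (k.choose j))
  rw [zoomCoeff, eval_hermiteReal, eval_hermiteReal, ← hfactorial]
  linear_combination (-a ^ (k - j) * b ^ j * hermiteFn (k - j) x * hermiteFn j y *
    Real.sqrt j.factorial * Real.sqrt (k - j).factorial) * hchoose

theorem sum_pow_mul_zoomCoeff_sq (a b ρ : ℝ) {k d : ℕ} (hkd : k ≤ d) :
    ∑ j ∈ Finset.range (d + 1), ρ ^ j * zoomCoeff a b k j ^ 2 = (a ^ 2 + ρ * b ^ 2) ^ k := by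
  rw [sum_range_succ_eq_of_le hkd fun j hj => by simp [zoomCoeff_eq_zero_of_lt a b hj],
    add_comm (a ^ 2), add_pow]
  refine Finset.sum_congr rfl fun j _ => ?_
  rw [zoomCoeff, mul_pow, mul_pow, Real.sq_sqrt (by positivity)]
  ring

section Multivariate

variable {n : ℕ}

instance : IsProbabilityMeasure (gaussianN n) :=
  inferInstanceAs (IsProbabilityMeasure (Measure.pi _))

theorem continuous_hermiteMv (α : Fin n → ℕ) : Continuous (hermiteMv α) :=
  continuous_finsetProd _ fun i _ => (continuous_hermiteFn (α i)).comp (continuous_apply i)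

theorem integrable_hermiteMv_mul_hermiteMv (α β : Fin n → ℕ) :
    Integrable (fun x => hermiteMv α x * hermiteMv β x) (gaussianN n) := by
  simp only [hermiteMv, ← Finset.prod_mul_distrib]
  exact Integrable.fintype_prod fun i => integrable_hermiteFn_mul_hermiteFn (α i) (β i)

theorem memLp_hermiteMv (α : Fin n → ℕ) : MemLp (hermiteMv α) 2 (gaussianN n) := by
  rw [memLp_two_iff_integrable_sq (continuous_hermiteMv α).aestronglyMeasurable]
  simpa only [pow_two] using integrable_hermiteMv_mul_hermiteMv α α

theorem integral_hermiteMv_mul_hermiteMv (α β : Fin n → ℕ) :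
    ∫ x, hermiteMv α x * hermiteMv β x ∂(gaussianN n) = if α = β then 1 else 0 := by
  simp only [hermiteMv, ← Finset.prod_mul_distrib, gaussianN]
  rw [integral_fintype_prod_eq_prod fun i t => hermiteFn (α i) t * hermiteFn (β i) t]
  simp [integral_hermiteFn_mul_hermiteFn, Fintype.prod_ite_zero, funext_iff]

theorem hermiteCoeffF_sum (S : Finset (Fin n → ℕ)) (c : (Fin n → ℕ) → ℝ) (β : Fin n → ℕ) :
    hermiteCoeffF (fun x => ∑ α ∈ S, c α * hermiteMv α x) β = if β ∈ S then c β else 0 := by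
  simp only [hermiteCoeffF, Finset.sum_mul, mul_assoc]
  rw [integral_finsetSum _ fun α _ => (integrable_hermiteMv_mul_hermiteMv α β).const_mul _]
  simp [integral_const_mul, integral_hermiteMv_mul_hermiteMv]

theorem integral_sum_mul_hermiteMv_sq {ι : Type*} {S : Finset ι} {c : ι → ℝ}
    {p : ι → Fin n → ℕ} (hp : ∀ i ∈ S, ∀ j ∈ S, c i ≠ 0 → c j ≠ 0 → p i = p j → i = j) :
    ∫ x, (∑ i ∈ S, c i * hermiteMv (p i) x) ^ 2 ∂(gaussianN n) = ∑ i ∈ S, c i ^ 2 := by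
  have hint (i j : ι) : Integrable
      (fun x => c i * hermiteMv (p i) x * (c j * hermiteMv (p j) x)) (gaussianN n) := by
    simpa only [mul_mul_mul_comm] using
      (integrable_hermiteMv_mul_hermiteMv (p i) (p j)).const_mul (c i * c j)
  simp only [pow_two, Finset.sum_mul_sum]
  rw [integral_finsetSum _ fun i _ => integrable_finsetSum _ fun j _ => hint i j]
  refine Finset.sum_congr rfl fun i hi => ?_
  rw [integral_finsetSum _ fun j _ => hint i j]
  simp only [mul_mul_mul_comm, integral_const_mul, integral_hermiteMv_mul_hermiteMv]
  rw [Finset.sum_eq_single_of_mem i hi, if_pos rfl, mul_one]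
  intro j hj hji
  rcases eq_or_ne (c i) 0 with hci | hci
  · simp [hci]
  rcases eq_or_ne (c j) 0 with hcj | hcj
  · simp [hcj]
  rw [if_neg fun h => hji (hp i hi j hj hci hcj h).symm, mul_zero]

theorem hermiteCoeff_eq_sum {g : MvPolynomial (Fin n) ℝ} {S : Finset (Fin n →₀ ℕ)}
    (hS : g.support ⊆ S) (α : Fin n → ℕ) :
    hermiteCoeff g α =
      ∑ s ∈ S, coeff s g * ∏ i, polyHermiteCoeff (Polynomial.X ^ s i) (α i) := by
  have heval (x : Fin n → ℝ) : eval x g = ∑ s ∈ S, coeff s g * ∏ i, x i ^ s i := by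
    rw [eval_eq']
    exact Finset.sum_subset hS fun s _ hs => by rw [notMem_support_iff.1 hs, zero_mul]
  have hint (s : Fin n →₀ ℕ) :
      Integrable (fun x => ∏ i, x i ^ s i * hermiteFn (α i) (x i)) (gaussianN n) :=
    Integrable.fintype_prod fun i => by
      simpa using integrable_eval_mul_hermiteFn (Polynomial.X ^ s i) (α i)
  simp only [hermiteCoeff, hermiteCoeffF, heval, Finset.sum_mul, mul_assoc, hermiteMv,
    ← Finset.prod_mul_distrib]
  rw [integral_finsetSum _ fun s _ => (hint s).const_mul _]
  refine Finset.sum_congr rfl fun s _ => ?_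
  rw [integral_const_mul, gaussianN,
    integral_fintype_prod_eq_prod fun i t => t ^ s i * hermiteFn (α i) t]
  simp [polyHermiteCoeff]

theorem hermiteCoeff_eq_zero_of_totalDegree_lt {g : MvPolynomial (Fin n) ℝ} {α : Fin n → ℕ}
    (hα : g.totalDegree < ∑ i, α i) : hermiteCoeff g α = 0 := by
  rw [hermiteCoeff_eq_sum subset_rfl]
  refine Finset.sum_eq_zero fun s hs => ?_
  obtain ⟨i, -, hi⟩ : ∃ i ∈ Finset.univ, s i < α i := by
    refine Finset.exists_lt_of_sum_lt (lt_of_le_of_lt ?_ hα)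
    rw [← Finsupp.degree_eq_sum]
    exact le_totalDegree hs
  rw [Finset.prod_eq_zero (Finset.mem_univ i) (polyHermiteCoeff_eq_zero (by simpa using hi)),
    mul_zero]

/-- The multi-indices with all entries at most `d`. They include those of degree at most `d`, and
unlike these they are the index set of the expansion of a product of `n` univariate sums. -/
def degreeBox (n d : ℕ) : Finset (Fin n → ℕ) :=
  Fintype.piFinset fun _ => Finset.range (d + 1)

theorem mem_degreeBox {d : ℕ} {α : Fin n → ℕ} : α ∈ degreeBox n d ↔ ∀ i, α i ≤ d := by
  simp [degreeBox]

theorem lt_sum_of_notMem_degreeBox {d : ℕ} {α : Fin n → ℕ} (hα : α ∉ degreeBox n d) :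
    d < ∑ i, α i := by
  rw [mem_degreeBox] at hα
  push Not at hα
  obtain ⟨i, hi⟩ := hα
  exact hi.trans_le (Finset.single_le_sum_of_canonicallyOrdered (Finset.mem_univ i))

theorem prod_sum_range_eq_sum_degreeBox {R : Type*} [CommSemiring R] (d : ℕ) (f : Fin n → ℕ → R) :
    ∏ i, ∑ j ∈ Finset.range (d + 1), f i j = ∑ α ∈ degreeBox n d, ∏ i, f i (α i) :=
  Finset.prod_univ_sum _ _

theorem eval_eq_sum_hermiteCoeff {d : ℕ} {g : MvPolynomial (Fin n) ℝ} (hg : g.totalDegree ≤ d)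
    (x : Fin n → ℝ) :
    eval x g = ∑ α ∈ degreeBox n d, hermiteCoeff g α * hermiteMv α x := by
  have hpow {k : ℕ} (hk : k ≤ d) (t : ℝ) : t ^ k = ∑ j ∈ Finset.range (d + 1),
      polyHermiteCoeff (Polynomial.X ^ k) j * hermiteFn j t := by
    simpa using eval_eq_sum_polyHermiteCoeff (p := Polynomial.X ^ k) (by simpa using hk) t
  simp only [hermiteCoeff_eq_sum (subset_refl g.support), Finset.sum_mul]
  rw [eval_eq', Finset.sum_comm]
  refine Finset.sum_congr rfl fun s hs => ?_
  have hsd (i : Fin n) : s i ≤ d := (s.le_degree i).trans ((le_totalDegree hs).trans hg)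
  rw [Finset.prod_congr rfl fun i _ => hpow (hsd i) (x i), prod_sum_range_eq_sum_degreeBox,
    Finset.mul_sum]
  simp only [Finset.prod_mul_distrib, hermiteMv, mul_assoc]

theorem memLp_eval_gaussianN (P : MvPolynomial (Fin n) ℝ) :
    MemLp (fun x => eval x P) 2 (gaussianN n) := by
  simp only [eval_eq_sum_hermiteCoeff le_rfl]
  exact memLp_finsetSum _ fun α _ => (memLp_hermiteMv α).const_mul _

end Multivariate

section Energy

variable {n : ℕ}

/-- The Hermite weight of `g` with degree `k` discounted by `ρ ^ k`, i.e. `‖T_{√ρ} g‖₂²` for the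
noise operator `T`. It equals `‖g‖₂²` at `ρ = 1`, and it bounds `hyperVarGE R` at `ρ > R²`. -/
noncomputable def hermiteEnergy (ρ : ℝ) (g : MvPolynomial (Fin n) ℝ) : ℝ :=
  ∑' α : Fin n → ℕ, ρ ^ (∑ i, α i) * hermiteCoeff g α ^ 2

theorem hermiteCoeff_eq_zero_of_notMem_degreeBox {d : ℕ} {g : MvPolynomial (Fin n) ℝ}
    (hg : g.totalDegree ≤ d) {α : Fin n → ℕ} (hα : α ∉ degreeBox n d) : hermiteCoeff g α = 0 :=
  hermiteCoeff_eq_zero_of_totalDegree_lt (hg.trans_lt (lt_sum_of_notMem_degreeBox hα))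

theorem hermiteEnergy_eq_sum {d : ℕ} {g : MvPolynomial (Fin n) ℝ} (hg : g.totalDegree ≤ d)
    (ρ : ℝ) :
    hermiteEnergy ρ g = ∑ α ∈ degreeBox n d, ρ ^ (∑ i, α i) * hermiteCoeff g α ^ 2 :=
  tsum_eq_sum fun α hα => by simp [hermiteCoeff_eq_zero_of_notMem_degreeBox hg hα]

theorem norm2sq_eq_hermiteEnergy_one (g : MvPolynomial (Fin n) ℝ) :
    norm2sq g = hermiteEnergy 1 g := by
  simp only [norm2sq, eval_eq_sum_hermiteCoeff le_rfl, hermiteEnergy_eq_sum le_rfl, one_pow,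
    one_mul]
  exact integral_sum_mul_hermiteMv_sq fun _ _ _ _ _ _ h => h

theorem hermiteEnergy_nonneg {ρ : ℝ} (hρ : 0 ≤ ρ) (g : MvPolynomial (Fin n) ℝ) :
    0 ≤ hermiteEnergy ρ g :=
  tsum_nonneg fun _ => by positivity

theorem norm2sq_nonneg (g : MvPolynomial (Fin n) ℝ) : 0 ≤ norm2sq g :=
  integral_nonneg fun _ => sq_nonneg _

theorem hyperVarGE_nonneg (R : ℝ) (m : ℕ) (g : MvPolynomial (Fin n) ℝ) :
    0 ≤ hyperVarGE R m g := by
  refine tsum_nonneg fun α => ?_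
  rw [pow_mul]
  positivity

theorem hyperVarGE_le {s : ℝ} (hs : 1 ≤ s) (R : ℝ) (m : ℕ) (g : MvPolynomial (Fin n) ℝ) :
    hyperVarGE R m g ≤ s⁻¹ ^ m * hermiteEnergy (s * R ^ 2) g := by
  have hs0 : 0 < s := zero_lt_one.trans_le hs
  rw [hermiteEnergy_eq_sum le_rfl, hyperVarGE, tsum_eq_sum (s := degreeBox n g.totalDegree)
    fun α hα => by simp [hermiteCoeff_eq_zero_of_notMem_degreeBox le_rfl hα], Finset.mul_sum]
  refine Finset.sum_le_sum fun α _ => ?_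
  split_ifs with hm
  · have hweight : 1 ≤ s⁻¹ ^ m * s ^ ∑ i, α i := by
      rw [inv_pow, ← div_eq_inv_mul, one_le_div (pow_pos hs0 m)]
      exact pow_le_pow_right₀ hs hm
    have hR : 0 ≤ R ^ (2 * ∑ i, α i) := by
      rw [pow_mul]
      positivity
    calc R ^ (2 * ∑ i, α i) * hermiteCoeff g α ^ 2
        ≤ s⁻¹ ^ m * s ^ (∑ i, α i) * (R ^ (2 * ∑ i, α i) * hermiteCoeff g α ^ 2) :=
          le_mul_of_one_le_left (by positivity) hweight
      _ = s⁻¹ ^ m * ((s * R ^ 2) ^ (∑ i, α i) * hermiteCoeff g α ^ 2) := by ring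
  · positivity

theorem hermiteEnergy_le_pow_mul_norm2sq {d : ℕ} {g : MvPolynomial (Fin n) ℝ}
    (hg : g.totalDegree ≤ d) {ρ : ℝ} (hρ : 1 ≤ ρ) :
    hermiteEnergy ρ g ≤ ρ ^ d * norm2sq g := by
  rw [norm2sq_eq_hermiteEnergy_one, hermiteEnergy_eq_sum hg, hermiteEnergy_eq_sum hg,
    Finset.mul_sum]
  refine Finset.sum_le_sum fun α _ => ?_
  rw [one_pow, one_mul]
  rcases le_or_gt (∑ i, α i) d with hα | hα
  · gcongr
  · simp [hermiteCoeff_eq_zero_of_totalDegree_lt (hg.trans_lt hα)]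

end Energy

theorem totalDegree_aeval_le {σ τ R : Type*} [CommSemiring R] {f : σ → MvPolynomial τ R}
    (hf : ∀ i, (f i).totalDegree ≤ 1) (p : MvPolynomial σ R) :
    (aeval f p).totalDegree ≤ p.totalDegree := by
  rw [aeval_def, eval₂_eq]
  refine totalDegree_finsetSum_le fun s hs => ?_
  calc (algebraMap R (MvPolynomial τ R) (coeff s p) * ∏ i ∈ s.support, f i ^ s i).totalDegree
      ≤ 0 + (∏ i ∈ s.support, f i ^ s i).totalDegree :=
        (totalDegree_mul _ _).trans_eq (by rw [algebraMap_eq, totalDegree_C])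
    _ ≤ ∑ i ∈ s.support, s i := by
        rw [zero_add]
        refine (totalDegree_finsetProd _ _).trans (Finset.sum_le_sum fun i _ => ?_)
        exact (totalDegree_pow _ _).trans (mul_le_of_le_one_right' (hf i))
    _ ≤ p.totalDegree := le_totalDegree hs

section Zoom

variable {n d : ℕ} {g : MvPolynomial (Fin n) ℝ} {lam : ℝ}

theorem eval_zoom (x y : Fin n → ℝ) :
    eval y (zoom g lam x) = eval (fun i => Real.sqrt (1 - lam) * x i + Real.sqrt lam * y i) g := by
  rw [zoom, ← coe_aeval_eq_eval, AlgHom.coe_toRingHom, ← AlgHom.comp_apply, comp_aeval, aeval_def,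
    eval₂_eq_eval_map]
  simp

theorem hermiteMv_add {a b : ℝ} (hab : a ^ 2 + b ^ 2 = 1) {α : Fin n → ℕ} (hα : α ∈ degreeBox n d)
    (x y : Fin n → ℝ) :
    hermiteMv α (fun i => a * x i + b * y i) = ∑ β ∈ degreeBox n d,
      (∏ i, zoomCoeff a b (α i) (β i)) * hermiteMv (α - β) x * hermiteMv β y := by
  rw [hermiteMv, Finset.prod_congr rfl fun i _ =>
    hermiteFn_add hab (mem_degreeBox.1 hα i) (x i) (y i), prod_sum_range_eq_sum_degreeBox]
  simp only [hermiteMv, Finset.prod_mul_distrib, Pi.sub_apply]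

theorem totalDegree_zoom_le (x : Fin n → ℝ) : (zoom g lam x).totalDegree ≤ g.totalDegree :=
  totalDegree_aeval_le (fun i => (totalDegree_add _ _).trans
    (max_le ((totalDegree_C _).trans_le zero_le_one) ((totalDegree_mul _ _).trans (by simp)))) g

theorem prod_zoomCoeff_eq_zero_of_not_le (a b : ℝ) {α β : Fin n → ℕ} (h : ¬β ≤ α) :
    ∏ i, zoomCoeff a b (α i) (β i) = 0 := by
  obtain ⟨i, hi⟩ := not_forall.1 h
  exact Finset.prod_eq_zero (Finset.mem_univ i) (zoomCoeff_eq_zero_of_lt a b (not_le.1 hi))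

theorem hermiteCoeff_zoom (hg : g.totalDegree ≤ d) (h0 : 0 ≤ lam) (h1 : lam ≤ 1)
    (x : Fin n → ℝ) (β : Fin n → ℕ) :
    hermiteCoeff (zoom g lam x) β = ∑ α ∈ degreeBox n d, hermiteCoeff g α *
      (∏ i, zoomCoeff (Real.sqrt (1 - lam)) (Real.sqrt lam) (α i) (β i)) *
        hermiteMv (α - β) x := by
  by_cases hβ : β ∈ degreeBox n d
  · have hab : Real.sqrt (1 - lam) ^ 2 + Real.sqrt lam ^ 2 = 1 := by
      rw [Real.sq_sqrt (sub_nonneg.2 h1), Real.sq_sqrt h0, sub_add_cancel]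
    have heval (y : Fin n → ℝ) : eval y (zoom g lam x) = ∑ β ∈ degreeBox n d,
        (∑ α ∈ degreeBox n d, hermiteCoeff g α *
          (∏ i, zoomCoeff (Real.sqrt (1 - lam)) (Real.sqrt lam) (α i) (β i)) *
            hermiteMv (α - β) x) * hermiteMv β y := by
      rw [eval_zoom, eval_eq_sum_hermiteCoeff hg]
      simp only [Finset.sum_mul]
      rw [Finset.sum_comm]
      refine Finset.sum_congr rfl fun α hα => ?_
      rw [hermiteMv_add hab hα, Finset.mul_sum]
      exact Finset.sum_congr rfl fun β _ => by ring
    simp only [hermiteCoeff, heval]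
    rw [hermiteCoeffF_sum, if_pos hβ]
  · rw [hermiteCoeff_eq_zero_of_notMem_degreeBox ((totalDegree_zoom_le x).trans hg) hβ]
    refine (Finset.sum_eq_zero fun α hα => ?_).symm
    have hle : ¬β ≤ α := fun h =>
      hβ (mem_degreeBox.2 fun i => (h i).trans (mem_degreeBox.1 hα i))
    rw [prod_zoomCoeff_eq_zero_of_not_le _ _ hle, mul_zero, zero_mul]

theorem integral_hermiteCoeff_zoom_sq (hg : g.totalDegree ≤ d) (h0 : 0 ≤ lam) (h1 : lam ≤ 1)
    (β : Fin n → ℕ) :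
    ∫ x, hermiteCoeff (zoom g lam x) β ^ 2 ∂(gaussianN n) = ∑ α ∈ degreeBox n d,
      hermiteCoeff g α ^ 2 *
        ∏ i, zoomCoeff (Real.sqrt (1 - lam)) (Real.sqrt lam) (α i) (β i) ^ 2 := by
  simp only [hermiteCoeff_zoom hg h0 h1]
  rw [integral_sum_mul_hermiteMv_sq]
  · simp only [mul_pow, Finset.prod_pow]
  -- The weight of `α` vanishes unless `β ≤ α`, and `α ↦ α - β` is injective there.
  intro α _ α' _ hα hα' h
  have hle {γ : Fin n → ℕ} (hγ : hermiteCoeff g γ *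
      ∏ i, zoomCoeff (Real.sqrt (1 - lam)) (Real.sqrt lam) (γ i) (β i) ≠ 0) : β ≤ γ := by
    by_contra hβγ
    exact right_ne_zero_of_mul hγ (prod_zoomCoeff_eq_zero_of_not_le _ _ hβγ)
  exact (tsub_left_inj (hle hα) (hle hα')).1 h

theorem integral_hermiteEnergy_zoom (h0 : 0 ≤ lam) (h1 : lam ≤ 1) (ρ : ℝ) :
    ∫ x, hermiteEnergy ρ (zoom g lam x) ∂(gaussianN n) =
      hermiteEnergy (1 - lam + ρ * lam) g := by
  have hint (β : Fin n → ℕ) : Integrable (fun x =>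
      ρ ^ (∑ i, β i) * hermiteCoeff (zoom g lam x) β ^ 2) (gaussianN n) := by
    refine Integrable.const_mul (MemLp.integrable_sq ?_) _
    simp only [hermiteCoeff_zoom le_rfl h0 h1]
    exact memLp_finsetSum _ fun α _ => (memLp_hermiteMv (α - β)).const_mul _
  simp only [hermiteEnergy_eq_sum (totalDegree_zoom_le _),
    hermiteEnergy_eq_sum (le_refl g.totalDegree)]
  rw [integral_finsetSum _ fun β _ => hint β]
  simp only [integral_const_mul, integral_hermiteCoeff_zoom_sq (le_refl g.totalDegree) h0 h1,
    Finset.mul_sum]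
  rw [Finset.sum_comm]
  refine Finset.sum_congr rfl fun α hα => ?_
  have hprod : (1 - lam + ρ * lam) ^ (∑ i, α i) = ∑ β ∈ degreeBox n g.totalDegree, ∏ i,
      (ρ ^ β i * zoomCoeff (Real.sqrt (1 - lam)) (Real.sqrt lam) (α i) (β i) ^ 2) := by
    rw [← prod_sum_range_eq_sum_degreeBox _ fun i j =>
      ρ ^ j * zoomCoeff (Real.sqrt (1 - lam)) (Real.sqrt lam) (α i) j ^ 2,
      ← Finset.prod_pow_eq_pow_sum]
    refine Finset.prod_congr rfl fun i _ => ?_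
    rw [sum_pow_mul_zoomCoeff_sq _ _ _ (mem_degreeBox.1 hα i), Real.sq_sqrt (sub_nonneg.2 h1),
      Real.sq_sqrt h0]
  rw [hprod, Finset.sum_mul]
  refine Finset.sum_congr rfl fun β _ => ?_
  rw [Finset.prod_mul_distrib, Finset.prod_pow_eq_pow_sum]
  ring

end Zoom

theorem memLp_two_mul_prod {X Y : Type*} [MeasurableSpace X] [MeasurableSpace Y] {μ : Measure X}
    {κ : Measure Y} [SFinite κ] {f : X → ℝ} {k : Y → ℝ} (hf : MemLp f 2 μ) (hk : MemLp k 2 κ) :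
    MemLp (fun z : X × Y => f z.1 * k z.2) 2 (μ.prod κ) := by
  refine (memLp_two_iff_integrable_sq
    (hf.aestronglyMeasurable.comp_fst.mul hk.aestronglyMeasurable.comp_snd)).2 ?_
  simpa only [Pi.mul_apply, mul_pow] using hf.integrable_sq.mul_prod hk.integrable_sq

theorem measure_integral_div_lt_le {Ω : Type*} [MeasurableSpace Ω] {μ : Measure Ω}
    {f : Ω → ℝ} (hf0 : 0 ≤ᵐ[μ] f) (hf : Integrable f μ) {β : ℝ} (hβ : 0 < β) :
    μ {ω | (∫ ω, f ω ∂μ) / β < f ω} ≤ ENNReal.ofReal β := by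
  rcases (integral_nonneg_of_ae hf0).eq_or_lt with h | h
  · have hzero : f =ᵐ[μ] 0 := (integral_eq_zero_iff_of_nonneg_ae hf0 hf).1 h.symm
    refine le_of_eq_of_le (measure_eq_zero_iff_ae_notMem.2 ?_) zero_le
    filter_upwards [hzero] with ω hω
    simp [hω, ← h]
  · have hlt : 0 < (∫ ω, f ω ∂μ) / β := div_pos h hβ
    have hmarkov := mul_meas_ge_le_integral_of_nonneg hf0 hf ((∫ ω, f ω ∂μ) / β)
    rw [div_mul_eq_mul_div, div_le_iff₀ hβ] at hmarkov
    have hreal := le_of_mul_le_mul_left hmarkov h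
    have hfin := (hf.measure_ge_lt_top hlt).ne
    calc μ {ω | (∫ ω, f ω ∂μ) / β < f ω} ≤ μ {ω | (∫ ω, f ω ∂μ) / β ≤ f ω} :=
          measure_mono fun ω hω => le_of_lt (α := ℝ) hω
      _ ≤ ENNReal.ofReal β := (ENNReal.le_ofReal_iff_toReal_le hfin hβ.le).2 hreal

section Family

variable {n d : ℕ} {Ω : Type*} [MeasurableSpace Ω] {ν : Measure Ω}
  {g : Ω → MvPolynomial (Fin n) ℝ} {lam : ℝ}

theorem memLp_hermiteCoeff (hdeg : ∀ υ, (g υ).totalDegree ≤ d)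
    (hcoeff : ∀ s, MemLp (fun υ => coeff s (g υ)) 2 ν) (α : Fin n → ℕ) :
    MemLp (fun υ => hermiteCoeff (g υ) α) 2 ν := by
  have hsupport (υ : Ω) : (g υ).support ⊆ (Finsupp.finite_of_degree_le d).toFinset := fun s hs =>
    (Set.Finite.mem_toFinset _).2 ((le_totalDegree hs).trans (hdeg υ))
  simp only [fun υ => hermiteCoeff_eq_sum (hsupport υ) α]
  exact memLp_finsetSum _ fun s _ => (hcoeff s).mul_const _

theorem integrable_hermiteEnergy (hdeg : ∀ υ, (g υ).totalDegree ≤ d)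
    (hL2 : ∀ α, MemLp (fun υ => hermiteCoeff (g υ) α) 2 ν) (ρ : ℝ) :
    Integrable (fun υ => hermiteEnergy ρ (g υ)) ν := by
  simp only [fun υ => hermiteEnergy_eq_sum (hdeg υ) ρ]
  exact integrable_finsetSum _ fun α _ => (hL2 α).integrable_sq.const_mul _

theorem integrable_norm2sq (hdeg : ∀ υ, (g υ).totalDegree ≤ d)
    (hL2 : ∀ α, MemLp (fun υ => hermiteCoeff (g υ) α) 2 ν) :
    Integrable (fun υ => norm2sq (g υ)) ν := by
  simpa only [norm2sq_eq_hermiteEnergy_one] using integrable_hermiteEnergy hdeg hL2 1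

theorem memLp_hermiteCoeff_zoom [SFinite ν] (hdeg : ∀ υ, (g υ).totalDegree ≤ d)
    (hL2 : ∀ α, MemLp (fun υ => hermiteCoeff (g υ) α) 2 ν) (h0 : 0 ≤ lam) (h1 : lam ≤ 1)
    (β : Fin n → ℕ) :
    MemLp (fun z : (Fin n → ℝ) × Ω => hermiteCoeff (zoom (g z.2) lam z.1) β) 2
      ((gaussianN n).prod ν) := by
  simp only [fun z : (Fin n → ℝ) × Ω => hermiteCoeff_zoom (hdeg z.2) h0 h1 z.1 β]
  refine memLp_finsetSum _ fun α _ => ?_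
  simpa only [mul_comm (hermiteMv _ _)] using
    memLp_two_mul_prod (memLp_hermiteMv (α - β)) ((hL2 α).mul_const _)

theorem integrable_hermiteEnergy_zoom [SFinite ν] (hdeg : ∀ υ, (g υ).totalDegree ≤ d)
    (hL2 : ∀ α, MemLp (fun υ => hermiteCoeff (g υ) α) 2 ν) (h0 : 0 ≤ lam) (h1 : lam ≤ 1)
    (ρ : ℝ) :
    Integrable (fun z : (Fin n → ℝ) × Ω => hermiteEnergy ρ (zoom (g z.2) lam z.1))
      ((gaussianN n).prod ν) := by
  have hdeg' (z : (Fin n → ℝ) × Ω) : (zoom (g z.2) lam z.1).totalDegree ≤ d :=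
    (totalDegree_zoom_le z.1).trans (hdeg z.2)
  have hL2' := memLp_hermiteCoeff_zoom hdeg hL2 h0 h1
  exact integrable_hermiteEnergy hdeg' hL2' ρ

theorem integral_integral_hermiteEnergy_zoom_le [SFinite ν] (hdeg : ∀ υ, (g υ).totalDegree ≤ d)
    (hL2 : ∀ α, MemLp (fun υ => hermiteCoeff (g υ) α) 2 ν) (h0 : 0 ≤ lam) (h1 : lam ≤ 1)
    {ρ : ℝ} (hρ : 1 ≤ ρ) :
    ∫ x, ∫ υ, hermiteEnergy ρ (zoom (g υ) lam x) ∂ν ∂(gaussianN n) ≤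
      (1 - lam + ρ * lam) ^ d * ∫ υ, norm2sq (g υ) ∂ν := by
  have hweight : 1 ≤ 1 - lam + ρ * lam := by linarith [le_mul_of_one_le_left h0 hρ]
  rw [integral_integral_swap (integrable_hermiteEnergy_zoom hdeg hL2 h0 h1 ρ),
    ← integral_const_mul]
  simp only [integral_hermiteEnergy_zoom h0 h1]
  exact integral_mono (integrable_hermiteEnergy hdeg hL2 _)
    ((integrable_norm2sq hdeg hL2).const_mul _)
    fun υ => hermiteEnergy_le_pow_mul_norm2sq (hdeg υ) hweight

theorem measure_lt_integral_hyperVarGE_zoom_le [SFinite ν] (hdeg : ∀ υ, (g υ).totalDegree ≤ d)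
    (hL2 : ∀ α, MemLp (fun υ => hermiteCoeff (g υ) α) 2 ν) (h0 : 0 ≤ lam) (h1 : lam ≤ 1)
    {s R β : ℝ} (hs : 1 ≤ s) (hR : 1 ≤ R) (hβ : 0 < β) (m : ℕ) :
    gaussianN n {x | s⁻¹ ^ m * ((1 - lam + s * R ^ 2 * lam) ^ d * ∫ υ, norm2sq (g υ) ∂ν) / β <
      ∫ υ, hyperVarGE R m (zoom (g υ) lam x) ∂ν} ≤ ENNReal.ofReal β := by
  have : 0 < s := zero_lt_one.trans_le hs
  have hρ : 1 ≤ s * R ^ 2 := one_le_mul_of_one_le_of_one_le hs (one_le_pow₀ hR)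
  have hint := (integrable_hermiteEnergy_zoom hdeg hL2 h0 h1 (s * R ^ 2)).const_mul (s⁻¹ ^ m)
  set F : (Fin n → ℝ) → ℝ := fun x =>
    ∫ υ, s⁻¹ ^ m * hermiteEnergy (s * R ^ 2) (zoom (g υ) lam x) ∂ν
  have hF0 (x : Fin n → ℝ) : 0 ≤ F x := integral_nonneg fun υ =>
    mul_nonneg (by positivity) (hermiteEnergy_nonneg (by positivity) _)
  have hF : ∫ x, F x ∂(gaussianN n) ≤
      s⁻¹ ^ m * ((1 - lam + s * R ^ 2 * lam) ^ d * ∫ υ, norm2sq (g υ) ∂ν) := by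
    simp only [F, integral_const_mul]
    gcongr
    exact integral_integral_hermiteEnergy_zoom_le hdeg hL2 h0 h1 hρ
  refine (measure_mono_ae ?_).trans
    (measure_integral_div_lt_le (.of_forall hF0) hint.integral_prod_left hβ)
  filter_upwards [hint.prod_right_ae] with x hx hlt
  refine (div_le_div_of_nonneg_right hF hβ.le).trans_lt (lt_of_lt_of_le hlt ?_)
  exact integral_mono_of_nonneg (.of_forall fun υ => hyperVarGE_nonneg _ _ _) hx
    (.of_forall fun υ => hyperVarGE_le hs R m _)

end Family

theorem one_sub_add_mul_pow_le_exp {ρ lam : ℝ} (h0 : 0 ≤ lam) (hρ : 1 ≤ ρ) (d : ℕ) :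
    (1 - lam + ρ * lam) ^ d ≤ Real.exp (ρ * lam * d) := by
  have hlam : 0 ≤ ρ * lam - lam := sub_nonneg.2 (le_mul_of_one_le_left h0 hρ)
  rw [mul_comm _ (d : ℝ), Real.exp_nat_mul]
  refine pow_le_pow_left₀ (by linarith) ?_ d
  linarith [Real.add_one_le_exp (ρ * lam)]

theorem inv_pow_mul_exp_le {m : ℕ} (hm : m ≠ 0) {ε β : ℝ} (hε : 0 < ε) (hε1 : ε ≤ 1)
    (hβ : 0 < β) (hβ1 : β ≤ 1) :
    (m ^ 4 / (ε * β ^ 5) : ℝ)⁻¹ ^ m * Real.exp m ≤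
      ε * β * (Real.exp (1 / 4) * β / m) ^ (4 * m) := by
  have hexp : Real.exp (1 / 4) ^ 4 = Real.exp 1 := by
    rw [← Real.exp_nat_mul]
    norm_num
  calc (m ^ 4 / (ε * β ^ 5) : ℝ)⁻¹ ^ m * Real.exp m
      = (ε * β) ^ m * (Real.exp (1 / 4) * β / m) ^ (4 * m) := by
        rw [← mul_one (m : ℝ), Real.exp_nat_mul, ← hexp, pow_mul _ 4 m, ← mul_pow, ← mul_pow,
          mul_one]
        congr 1
        field_simp
    _ ≤ ε * β * (Real.exp (1 / 4) * β / m) ^ (4 * m) := by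
        gcongr
        exact pow_le_of_le_one (by positivity) (mul_le_one₀ hε1 hβ.le hβ1) hm

theorem div_natCast_mul_le_one {a R : ℝ} (ha0 : 0 ≤ a) (ha : a ≤ 1) (hR : 1 ≤ R) (k : ℕ) :
    a / (R * k) ≤ 1 := by
  rcases eq_or_ne k 0 with rfl | hk
  · simp
  · have hk1 : (1 : ℝ) ≤ k := by exact_mod_cast Nat.one_le_iff_ne_zero.2 hk
    exact (div_le_self ha0 (one_le_mul_of_one_le_of_one_le hR hk1)).trans ha

theorem one_le_natCast_pow_div {m : ℕ} (hm : m ≠ 0) (k : ℕ) {a : ℝ} (ha0 : 0 < a) (ha : a ≤ 1) :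
    1 ≤ m ^ k / a := by
  have hm1 : (1 : ℝ) ≤ m := by exact_mod_cast Nat.one_le_iff_ne_zero.2 hm
  exact (one_le_div ha0).2 (ha.trans (one_le_pow₀ hm1))

theorem mul_pow_le_one_of_le_one {a b : ℝ} (ha : a ≤ 1) (hb0 : 0 ≤ b) (hb : b ≤ 1) (k : ℕ) :
    a * b ^ k ≤ 1 :=
  mul_le_one₀ ha (by positivity) (pow_le_one₀ hb0 hb)

theorem inv_pow_mul_one_sub_add_mul_pow_le {d m : ℕ} (hm : m ≠ 0) {β R ε lam : ℝ} (hβ : 0 < β)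
    (hβ1 : β ≤ 1) (hR : 1 ≤ R) (hε : 0 < ε) (hε1 : ε ≤ 1) (h0 : 0 ≤ lam)
    (hlam : lam ≤ ε * β ^ 5 / (R ^ 2 * m ^ 3 * d)) :
    (m ^ 4 / (ε * β ^ 5) : ℝ)⁻¹ ^ m * (1 - lam + m ^ 4 / (ε * β ^ 5) * R ^ 2 * lam) ^ d ≤
      ε * β * (Real.exp (1 / 4) * β / m) ^ (4 * m) := by
  have hexponent : m ^ 4 / (ε * β ^ 5) * R ^ 2 * lam * d ≤ (m : ℝ) := by
    have hmul : lam * (R ^ 2 * m ^ 3 * d) ≤ ε * β ^ 5 :=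
      mul_le_of_le_div₀ (by positivity) (by positivity) hlam
    calc (m ^ 4 / (ε * β ^ 5) * R ^ 2 * lam * d : ℝ)
        = m * (lam * (R ^ 2 * m ^ 3 * d) / (ε * β ^ 5)) := by ring
      _ ≤ m * 1 := by
          gcongr
          exact (div_le_one (by positivity)).2 hmul
      _ = m := mul_one _
  have hs : 1 ≤ m ^ 4 / (ε * β ^ 5) :=
    one_le_natCast_pow_div hm 4 (by positivity) (mul_pow_le_one_of_le_one hε1 hβ.le hβ1 5)
  have hweight : 1 ≤ m ^ 4 / (ε * β ^ 5) * R ^ 2 :=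
    one_le_mul_of_one_le_of_one_le hs (one_le_pow₀ hR)
  refine le_trans ?_ (inv_pow_mul_exp_le hm hε hε1 hβ hβ1)
  gcongr
  exact (one_sub_add_mul_pow_le_exp h0 hweight d).trans (Real.exp_le_exp.2 hexponent)

theorem attrition_of_high_degree_weight_general {n d m : ℕ} (hm : m ≠ 0) {Ω : Type*}
    [MeasurableSpace Ω] {ν : Measure Ω} [SFinite ν] {g : Ω → MvPolynomial (Fin n) ℝ}
    (hdeg : ∀ υ, (g υ).totalDegree ≤ d) (hcoeff : ∀ s, MemLp (fun υ => coeff s (g υ)) 2 ν)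
    {β R ε lam : ℝ} (hβ : 0 < β) (hβ1 : β ≤ 1) (hR : 1 ≤ R) (hε : 0 < ε) (hε1 : ε ≤ 1)
    (h0 : 0 ≤ lam) (hlam : lam ≤ ε * β ^ 5 / (R ^ 2 * m ^ 3 * d)) :
    gaussianN n {x | ¬ ((1 / ε) * (∫ υ, hyperVarGE R m (zoom (g υ) lam x) ∂ν) ≤
        (Real.exp (1 / 4) * β / m) ^ (4 * m) * ∫ υ, norm2sq (g υ) ∂ν)} ≤ ENNReal.ofReal β := by
  have hm1 : (1 : ℝ) ≤ m := by exact_mod_cast Nat.one_le_iff_ne_zero.2 hm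
  have hκ : ε * β ^ 5 ≤ 1 := mul_pow_le_one_of_le_one hε1 hβ.le hβ1 5
  have hs := one_le_natCast_pow_div hm 4 (by positivity) hκ
  have hlam1 : lam ≤ 1 := hlam.trans (div_natCast_mul_le_one (by positivity) hκ
    (one_le_mul_of_one_le_of_one_le (one_le_pow₀ hR) (one_le_pow₀ hm1)) d)
  have hA : 0 ≤ ∫ υ, norm2sq (g υ) ∂ν := integral_nonneg fun υ => norm2sq_nonneg _
  have hbound := mul_le_mul_of_nonneg_right
    (inv_pow_mul_one_sub_add_mul_pow_le hm hβ hβ1 hR hε hε1 h0 hlam) hA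
  refine (measure_mono fun x hx => ?_).trans (measure_lt_integral_hyperVarGE_zoom_le hdeg
    (memLp_hermiteCoeff hdeg hcoeff) h0 hlam1 hs hR hβ m)
  rw [Set.mem_ofPred_eq, not_le, one_div_mul_eq_div, lt_div_iff₀ hε] at hx
  refine lt_of_le_of_lt ((div_le_iff₀ hβ).2 ?_) hx
  linarith

theorem NiceFamily.memLp_coeff {n I d : ℕ} {g : (Fin I → ℝ) → MvPolynomial (Fin n) ℝ}
    (hg : NiceFamily n I d g) (s : Fin n →₀ ℕ) :
    MemLp (fun υ => coeff s (g υ)) 2 (gaussianN I) := by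
  obtain ⟨P, -, hP⟩ := hg.2 s
  simpa only [hP] using memLp_eval_gaussianN P

/-- Attrition of high-degree Hermite weight: there are universal constants `c > 0` and
`C ≥ 1` such that for a nice distribution `(g_υ)` of degree-`d` polynomials, parameters
`0 < β' < 1`, `R' ≥ 1`, `m ≥ 1`, `0 < ε ≤ 1`, and `0 ≤ λ ≤ c⁴·ε·β'⁵/(R'²·m³·d)`, for
`x ∼ N(0,1)^n`, except with probability at most `β'`,
`(1/ε)·E_υ[HyperVar_{R'}[((g_υ)_{λ|x})^{≥m}]] ≤ (C·c·β'/m)^{4m}·E_υ[‖g_υ‖₂²]`.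
Here `HyperVar_{R'}[g^{≥m}]` is encoded as `hyperVarGE R' m g`. -/
theorem attrition_of_high_degree_weight :
    ∃ c C : ℝ, 0 < c ∧ 1 ≤ C ∧
      ∀ (n I d m : ℕ), 1 ≤ m →
      ∀ g : (Fin I → ℝ) → MvPolynomial (Fin n) ℝ, NiceFamily n I d g →
      ∀ β' R' ε lam : ℝ, 0 < β' → β' < 1 → 1 ≤ R' → 0 < ε → ε ≤ 1 →
      0 ≤ lam → lam ≤ c ^ 4 * ε * β' ^ 5 / (R' ^ 2 * m ^ 3 * d) →
      gaussianN n {x | ¬ ((1 / ε) * (∫ υ, hyperVarGE R' m (zoom (g υ) lam x) ∂(gaussianN I)) ≤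
          (C * c * β' / m) ^ (4 * m) * ∫ υ, norm2sq (g υ) ∂(gaussianN I))} ≤
        ENNReal.ofReal β' := by
  refine ⟨1, Real.exp (1 / 4), one_pos, Real.one_le_exp (by norm_num), ?_⟩
  intro n I d m hm g hg β' R' ε lam hβ hβ1 hR hε hε1 h0 hlam
  simp only [one_pow, one_mul] at hlam
  simpa only [mul_one] using attrition_of_high_degree_weight_general (Nat.one_le_iff_ne_zero.1 hm)
    hg.1 hg.memLp_coeff hβ hβ1.le hR hε hε1 h0 hlam
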